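/- For every ε > 0 and every graph G with G →_2 K_3 (where K_3 is the triangle), there exists t_0 such that for all t ≥ t_0, the blowup Ramsey number satisfies B_2(G → K_3; t) ≤ 2^{(4+ε)t}. -/

import Mathlib

/-- The `n`-blowup of a graph: each vertex is replaced by an independent set of `n` vertices,
and each edge by a complete bipartite graph between the corresponding sets. -/
def blowupGraph {V : Type} (G : SimpleGraph V) (n : ℕ) : SimpleGraph (V × Fin n) :=
  SimpleGraph.comap Prod.fst G

/-- The coloring `C` admits a monochromatic copy of `H` in `G`. -/
def HasMonoCopy {V α : Type} (G : SimpleGraph V) (H : SimpleGraph α) {r : ℕ}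
    (C : Sym2 V → Fin r) : Prop :=
  ∃ (f : α → V) (c : Fin r), Function.Injective f ∧
    ∀ a b, H.Adj a b → G.Adj (f a) (f b) ∧ C s(f a, f b) = c

/-- `G →_r H`: every `r`-coloring of the edges of `G` contains a monochromatic copy of `H`. -/
def ArrowsFor {V α : Type} (G : SimpleGraph V) (H : SimpleGraph α) (r : ℕ) : Prop :=
  ∀ C : Sym2 V → Fin r, HasMonoCopy G H C

/-- The coloring `C` of `G[n]` admits a monochromatic canonical copy of `H[t]`:
an embedding `φ` of `H` into `G`, together with `t` blowup vertices `ψ a` in the part indexed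
by `φ a` for each vertex `a` of `H`, all of whose blowup edges receive the same color `c`. -/
def HasMonoCanonicalBlowup {V α : Type} (G : SimpleGraph V) (H : SimpleGraph α)
    (n t r : ℕ) (C : Sym2 (V × Fin n) → Fin r) : Prop :=
  ∃ (φ : α → V) (ψ : α → Fin t → Fin n) (c : Fin r),
    Function.Injective φ ∧ (∀ a, Function.Injective (ψ a)) ∧
    ∀ a b, H.Adj a b → G.Adj (φ a) (φ b) ∧ ∀ i j, C s((φ a, ψ a i), (φ b, ψ b j)) = c

/-- Every `r`-coloring of the edges of `G[n]` contains a monochromatic canonical copy of `H[t]`.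
The blowup Ramsey number `B_r(G → H; t)` is the minimum such `n`. -/
def BlowupArrow {V α : Type} (G : SimpleGraph V) (H : SimpleGraph α) (r n t : ℕ) : Prop :=
  ∀ C : Sym2 (V × Fin n) → Fin r, HasMonoCanonicalBlowup G H n t r C

/-!
In a dense pair of vertex sets, a subpair maximizing the density times a small power of its size is
lower regular and occupies a constant proportion of the pair. Doing this for the edges of `G` one
after the other, and using on each a color of density at least `1 / r`, passes to parts of linear
size such that every edge `e` of `G` has a color `χ e` which is lower regular of density almost
`1 / r` on it. Since `G` arrows the triangle, `χ` has a monochromatic triangle, with parts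
`A`, `B`, `C` say.

Let `R` be a random `m`-tuple in `A`. A typical `b ∈ B` is joined to all of `R` with probability at
least about `r⁻¹ ^ m`, and conditionally on this `R` is a random tuple in the neighborhood of `b`;
by lower regularity and concentration, about `#C / r` of the neighbors of `b` in `C` are then joined
to about `m / r` elements of `R`. Averaging gives one `R` and a set `Q` of `m` such vertices `b`, as
soon as `#B` exceeds about `r ^ m`. Many vertices of `C` are joined to about `m / r` elements of
each of `R` and `Q`. There are at most `4 ^ m` traces on `R` and `Q`, so if `#C` exceeds about
`4 ^ m` then `m` of these vertices have the same trace, and they complete the triangle with parts of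
size about `m / r`. Taking `m` slightly larger than `r t`, parts of size `max r 4 ^ ((r + o(1)) t)`
suffice; for `r = 2` this is `2 ^ ((4 + o(1)) t)`.
-/

open Finset

section Regularity

variable {α β : Type*} {r : α → β → Prop} [∀ a, DecidablePred (r a)] {X P : Finset α}
  {Y Q : Finset β} {δ d d' η : ℝ}

/-- Lower regularity of the pair `(X, Y)` in the bipartite graph `r`: every subpair whose sides have
relative size at least `δ` has edge density at least `d`. Densities are written without division,
so that subpairs with an empty side impose no condition. -/
def LowerRegular (r : α → β → Prop) [∀ a, DecidablePred (r a)] (δ d : ℝ) (X : Finset α)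
    (Y : Finset β) : Prop :=
  ∀ P ⊆ X, ∀ Q ⊆ Y, δ * #X ≤ #P → δ * #Y ≤ #Q → d * (#P * #Q) ≤ #(Rel.interedges r P Q)

theorem LowerRegular.subset (h : LowerRegular r (δ * d') d X Y) (hδ : 0 ≤ δ) (hP : P ⊆ X)
    (hQ : Q ⊆ Y) (hPcard : d' * #X ≤ #P) (hQcard : d' * #Y ≤ #Q) : LowerRegular r δ d P Q := by
  intro S hS T hT hScard hTcard
  refine h S (hS.trans hP) T (hT.trans hQ) ?_ ?_
  · exact (mul_assoc δ d' _).trans_le ((mul_le_mul_of_nonneg_left hPcard hδ).trans hScard)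
  · exact (mul_assoc δ d' _).trans_le ((mul_le_mul_of_nonneg_left hQcard hδ).trans hTcard)

theorem LowerRegular.swap (h : LowerRegular r δ d X Y) :
    LowerRegular (fun y x => r x y) δ d Y X := by
  intro Q hQ P hP hQcard hPcard
  have hcard : #(Rel.interedges (fun y x => r x y) Q P) = #(Rel.interedges r P Q) :=
    card_nbij' Prod.swap Prod.swap (by simp +contextual [Set.MapsTo, Rel.mem_interedges_iff])
      (by simp +contextual [Set.MapsTo, Rel.mem_interedges_iff]) (by simp [Set.LeftInvOn])
      (by simp [Set.LeftInvOn])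
  rw [hcard, mul_comm (#Q : ℝ)]
  exact h P hP Q hQ hPcard hQcard

theorem card_interedges_le_add_sdiff [DecidableEq α] [DecidableEq β] (r : α → β → Prop)
    [∀ a, DecidablePred (r a)] (X P : Finset α) (Y Q : Finset β) :
    #(Rel.interedges r X Y) ≤ #(Rel.interedges r P Q) + #(Rel.interedges r (X \ P) Y) +
      #(Rel.interedges r P (Y \ Q)) := by
  refine (card_le_card fun e he => ?_).trans
    ((card_union_le _ _).trans (Nat.add_le_add_right (card_union_le _ _) _))
  simp only [mem_union, Rel.mem_interedges_iff, mem_sdiff] at he ⊢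
  by_cases e.1 ∈ P <;> by_cases e.2 ∈ Q <;> simp_all

/-- The density of the pair `(X, Y)` multiplied by `(#X * #Y) ^ η`. A maximizer among all subpairs
of a dense pair is large because of the second factor, and lower regular because the density of no
subpair can be much higher. -/
noncomputable def weightedDensity (r : α → β → Prop) [∀ a, DecidablePred (r a)] (η : ℝ)
    (X : Finset α) (Y : Finset β) : ℝ :=
  #(Rel.interedges r X Y) * (#X * #Y : ℝ) ^ (η - 1)

theorem weightedDensity_eq_div_mul_rpow (h : (0 : ℝ) < #X * #Y) :
    weightedDensity r η X Y =
      #(Rel.interedges r X Y) / (#X * #Y : ℝ) * (#X * #Y : ℝ) ^ η := by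
  rw [weightedDensity, Real.rpow_sub_one h.ne', mul_div_assoc', div_mul_eq_mul_div]

theorem cast_card_interedges_le_mul (r : α → β → Prop) [∀ a, DecidablePred (r a)]
    (X : Finset α) (Y : Finset β) :
    (#(Rel.interedges r X Y) : ℝ) ≤ #X * #Y := by
  exact_mod_cast Rel.card_interedges_le_mul r X Y

theorem card_interedges_mul_le_of_weightedDensity_le (hη₀ : 0 ≤ η) (hη₁ : η ≤ 1)
    (hP : P ⊆ X) (hQ : Q ⊆ Y) (hle : weightedDensity r η P Q ≤ weightedDensity r η X Y) :
    #(Rel.interedges r P Q) * (#X * #Y : ℝ) ≤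
      #(Rel.interedges r X Y) * (#P * #Q + η * (#X * #Y)) := by
  have hcard := cast_card_interedges_le_mul r P Q
  have hvw : (#P * #Q : ℝ) ≤ #X * #Y := by gcongr
  unfold weightedDensity at hle
  set v : ℝ := #P * #Q with hv
  set w : ℝ := #X * #Y with hw
  set E : ℝ := (#(Rel.interedges r X Y) : ℝ)
  set e : ℝ := (#(Rel.interedges r P Q) : ℝ)
  obtain hv₀ | hv₀ : 0 = v ∨ 0 < v := (by positivity : 0 ≤ v).eq_or_lt
  · calc e * w ≤ 0 := mul_nonpos_of_nonpos_of_nonneg (hv₀ ▸ hcard) (by positivity)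
      _ ≤ E * (v + η * w) := by positivity
  have hw₀ : 0 < w := hv₀.trans_le hvw
  have bernoulli : (v / w) ^ (1 - η) ≤ v / w + η := by
    have hz : 0 ≤ v / w := by positivity
    have := rpow_one_add_le_one_add_mul_self (s := v / w - 1) (p := 1 - η)
      (by linarith) (by linarith) (by linarith)
    rw [add_sub_cancel] at this
    nlinarith
  calc e * w = e * v ^ (η - 1) * v ^ (1 - η) * w := by
        rw [mul_assoc e, ← Real.rpow_add hv₀]; simp
    _ ≤ E * w ^ (η - 1) * v ^ (1 - η) * w := by gcongr
    _ = E * (v / w) ^ (1 - η) * w := by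
        rw [Real.div_rpow hv₀.le hw₀.le, ← neg_sub 1 η, Real.rpow_neg hw₀.le]; ring
    _ ≤ E * (v / w + η) * w := by gcongr
    _ = E * (v + η * w) := by field_simp

theorem lowerRegular_of_forall_weightedDensity_le (hδ : 0 ≤ δ) (hη₀ : 0 ≤ η) (hη₁ : η ≤ 1)
    (hd : d' ≤ d) (hηd : 2 * η ≤ (d - d') * δ ^ 2)
    (hdense : d * (#X * #Y) ≤ #(Rel.interedges r X Y))
    (hmax : ∀ P ⊆ X, ∀ Q ⊆ Y, weightedDensity r η P Q ≤ weightedDensity r η X Y) :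
    LowerRegular r δ d' X Y := by
  classical
  intro P hP Q hQ hPcard hQcard
  have hsplit : (#(Rel.interedges r X Y) : ℝ) ≤ #(Rel.interedges r P Q) +
      #(Rel.interedges r (X \ P) Y) + #(Rel.interedges r P (Y \ Q)) := by
    exact_mod_cast card_interedges_le_add_sdiff r X P Y Q
  have hXP := card_interedges_mul_le_of_weightedDensity_le hη₀ hη₁
    sdiff_subset subset_rfl (hmax (X \ P) sdiff_subset Y subset_rfl)
  have hYQ := card_interedges_mul_le_of_weightedDensity_le hη₀ hη₁
    hP sdiff_subset (hmax P hP (Y \ Q) sdiff_subset)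
  have hE := cast_card_interedges_le_mul r X Y
  have hvw : (#P * #Q : ℝ) ≤ #X * #Y := by gcongr
  have hsize : δ ^ 2 * (#X * #Y : ℝ) ≤ #P * #Q :=
    calc δ ^ 2 * (#X * #Y : ℝ) = δ * #X * (δ * #Y) := by ring
      _ ≤ #P * #Q := by gcongr
  rw [cast_card_sdiff hP] at hXP
  rw [cast_card_sdiff hQ] at hYQ
  set w : ℝ := #X * #Y
  set v : ℝ := #P * #Q with hv
  set E : ℝ := (#(Rel.interedges r X Y) : ℝ)
  set e : ℝ := (#(Rel.interedges r P Q) : ℝ)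
  obtain hw₀ | hw₀ : 0 = w ∨ 0 < w := (by positivity : 0 ≤ w).eq_or_lt
  · have hv₀ : v = 0 := le_antisymm (hw₀ ▸ hvw) (by positivity)
    rw [hv₀, mul_zero]
    positivity
  have hlower : E * (v - 2 * η * w) ≤ e * w := by
    nlinarith [mul_le_mul_of_nonneg_right hsplit hw₀.le]
  have hloss : 2 * η * w ≤ (d - d') * v :=
    calc 2 * η * w ≤ (d - d') * δ ^ 2 * w := by gcongr
      _ = (d - d') * (δ ^ 2 * w) := mul_assoc _ _ _
      _ ≤ (d - d') * v := mul_le_mul_of_nonneg_left hsize (sub_nonneg.2 hd)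
  refine le_of_mul_le_mul_right ?_ hw₀
  calc d' * v * w = d * w * v - (d - d') * v * w := by ring
    _ ≤ E * v - 2 * η * w * E := by
        gcongr ?_ * v - ?_
        exact mul_le_mul hloss hE (by positivity) (by nlinarith)
    _ = E * (v - 2 * η * w) := by ring
    _ ≤ e * w := hlower

theorem card_mul_card_pos_of_le_weightedDensity {w : ℝ} (hd₀ : 0 < d) (hw₀ : 0 < w)
    (h : d * w ^ η ≤ weightedDensity r η X Y) : (0 : ℝ) < #X * #Y := by
  by_contra hXY
  have hzero : weightedDensity r η X Y ≤ 0 := mul_nonpos_of_nonpos_of_nonneg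
    ((cast_card_interedges_le_mul r X Y).trans (not_lt.1 hXY)) (by positivity)
  exact (h.trans hzero).not_gt (by positivity)

theorem le_card_interedges_of_le_weightedDensity {w : ℝ} (hd₀ : 0 < d) (hη₀ : 0 < η) (hw₀ : 0 < w)
    (hw : #X * #Y ≤ w) (h : d * w ^ η ≤ weightedDensity r η X Y) :
    d * (#X * #Y) ≤ #(Rel.interedges r X Y) := by
  have hXY := card_mul_card_pos_of_le_weightedDensity hd₀ hw₀ h
  rw [weightedDensity_eq_div_mul_rpow hXY] at h
  refine (le_div_iff₀ hXY).1 (le_of_mul_le_mul_right ?_ (Real.rpow_pos_of_pos hXY η))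
  exact le_trans (by gcongr) h

theorem rpow_inv_mul_le_of_le_weightedDensity {w : ℝ} (hd₀ : 0 < d) (hη₀ : 0 < η) (hw₀ : 0 < w)
    (h : d * w ^ η ≤ weightedDensity r η X Y) : d ^ η⁻¹ * w ≤ #X * #Y := by
  have hXY := card_mul_card_pos_of_le_weightedDensity hd₀ hw₀ h
  rw [weightedDensity_eq_div_mul_rpow hXY] at h
  rw [← Real.rpow_le_rpow_iff (by positivity) hXY.le hη₀, Real.mul_rpow (by positivity) hw₀.le,
    Real.rpow_inv_rpow hd₀.le hη₀.ne']
  exact h.trans (mul_le_of_le_one_left (by positivity)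
    (div_le_one_of_le₀ (cast_card_interedges_le_mul r X Y) hXY.le))

theorem exists_lowerRegular_of_le_card_interedges (hδ : 0 ≤ δ) (hd₀ : 0 < d) (hd₁ : d ≤ 1)
    (hd : d' ≤ d) (hη₀ : 0 < η) (hη₁ : η ≤ 1) (hηd : 2 * η ≤ (d - d') * δ ^ 2)
    (hdense : d * (#X * #Y) ≤ #(Rel.interedges r X Y)) :
    ∃ P ⊆ X, ∃ Q ⊆ Y, d ^ η⁻¹ * #X ≤ #P ∧ d ^ η⁻¹ * #Y ≤ #Q ∧ LowerRegular r δ d' P Q := by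
  obtain hw₀ | hw₀ : (0 : ℝ) = #X * #Y ∨ (0 : ℝ) < #X * #Y :=
    (by positivity : (0 : ℝ) ≤ #X * #Y).eq_or_lt
  · have hpow : d ^ η⁻¹ ≤ 1 := Real.rpow_le_one hd₀.le hd₁ (by positivity)
    refine ⟨X, subset_rfl, Y, subset_rfl, mul_le_of_le_one_left (by positivity) hpow,
      mul_le_of_le_one_left (by positivity) hpow, fun P hP Q hQ _ _ => ?_⟩
    have hv₀ : (#P * #Q : ℝ) = 0 := le_antisymm (hw₀ ▸ by gcongr) (by positivity)
    simp [hv₀]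
  obtain ⟨⟨P, Q⟩, hPQ, hmax⟩ := exists_max_image (X.powerset ×ˢ Y.powerset)
    (fun p => weightedDensity r η p.1 p.2) ⟨(X, Y), by simp⟩
  simp only [mem_product, mem_powerset, and_imp, Prod.forall] at hPQ hmax
  obtain ⟨hP, hQ⟩ := hPQ
  have hXY : d * (#X * #Y : ℝ) ^ η ≤ weightedDensity r η P Q := by
    refine le_trans ?_ (hmax X Y subset_rfl subset_rfl)
    rw [weightedDensity_eq_div_mul_rpow hw₀]
    gcongr
    exact (le_div_iff₀ hw₀).2 hdense
  have hdense' : d * (#P * #Q) ≤ #(Rel.interedges r P Q) :=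
    le_card_interedges_of_le_weightedDensity hd₀ hη₀ hw₀ (by gcongr) hXY
  have hlarge := rpow_inv_mul_le_of_le_weightedDensity hd₀ hη₀ hw₀ hXY
  refine ⟨P, hP, Q, hQ, ?_, ?_, lowerRegular_of_forall_weightedDensity_le hδ hη₀.le hη₁ hd hηd
    hdense' fun S hS T hT => hmax S T (hS.trans hP) (hT.trans hQ)⟩
  · refine le_of_mul_le_mul_right ?_ (pos_of_mul_pos_right hw₀ (by positivity) : (0 : ℝ) < #Y)
    calc d ^ η⁻¹ * #X * #Y ≤ #P * #Q := by rwa [mul_assoc]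
      _ ≤ #P * #Y := by gcongr
  · refine le_of_mul_le_mul_left ?_ (pos_of_mul_pos_left hw₀ (by positivity) : (0 : ℝ) < #X)
    calc #X * (d ^ η⁻¹ * #Y) ≤ #P * #Q := by rwa [mul_left_comm]
      _ ≤ #X * #Q := by gcongr

theorem exists_color_inv_card_mul_le_card_interedges {κ : Type*} [Fintype κ] [Nonempty κ]
    [DecidableEq κ] (χ : α → β → κ) (X : Finset α) (Y : Finset β) :
    ∃ k, (Fintype.card κ : ℝ)⁻¹ * (#X * #Y) ≤ #(Rel.interedges (fun x y => χ x y = k) X Y) := by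
  obtain ⟨k, -, hk⟩ := exists_le_card_fiber_of_nsmul_le_card_of_maps_to (s := X ×ˢ Y)
    (t := (univ : Finset κ)) (f := fun e => χ e.1 e.2)
    (b := (Fintype.card κ : ℝ)⁻¹ * (#X * #Y)) (fun _ _ => mem_univ _) univ_nonempty
    (by simp)
  exact ⟨k, hk⟩

theorem exists_lowerRegular_color {κ : Type*} [Fintype κ] [Nonempty κ] [DecidableEq κ]
    (hd : d < (Fintype.card κ : ℝ)⁻¹) (hδ : 0 < δ) :
    ∃ ρ > (0 : ℝ), ρ ≤ 1 ∧ ∀ {α β : Type} (χ : α → β → κ) (X : Finset α) (Y : Finset β),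
      ∃ (k : κ), ∃ P ⊆ X, ∃ Q ⊆ Y, ρ * #X ≤ #P ∧ ρ * #Y ≤ #Q ∧
        LowerRegular (fun x y => χ x y = k) δ d P Q := by
  set c : ℝ := (Fintype.card κ : ℝ)⁻¹
  have hc₀ : 0 < c := by positivity
  have hc₁ : c ≤ 1 := inv_le_one_of_one_le₀ (mod_cast Fintype.card_pos)
  have hgap : 0 < (c - d) * δ ^ 2 := mul_pos (sub_pos.2 hd) (by positivity)
  obtain ⟨η, hη₀, hη⟩ := exists_between (lt_min one_pos (half_pos hgap))
  obtain ⟨hη₁, hηd⟩ := lt_min_iff.1 hη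
  refine ⟨c ^ η⁻¹, by positivity, Real.rpow_le_one hc₀.le hc₁ (by positivity), fun χ X Y => ?_⟩
  obtain ⟨k, hk⟩ := exists_color_inv_card_mul_le_card_interedges χ X Y
  exact ⟨k, exists_lowerRegular_of_le_card_interedges hδ.le hc₀ hc₁ hd.le hη₀ hη₁.le
    (by linarith) hk⟩

theorem exists_shrink_two_parts {V W : Type*} {A : V → Finset W} {u v : V} (huv : u ≠ v)
    {P Q : Finset W} {ρ : ℝ} (hρ : ρ ≤ 1) (hP : P ⊆ A u) (hQ : Q ⊆ A v)
    (hPcard : ρ * #(A u) ≤ #P) (hQcard : ρ * #(A v) ≤ #Q) :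
    ∃ A' : V → Finset W, A' u = P ∧ A' v = Q ∧ ∀ w, A' w ⊆ A w ∧ ρ * #(A w) ≤ #(A' w) := by
  classical
  refine ⟨Function.update (Function.update A u P) v Q, by simp [huv], by simp, fun w => ?_⟩
  rcases eq_or_ne w v with rfl | hwv
  · simpa using ⟨hQ, hQcard⟩
  rcases eq_or_ne w u with rfl | hwu
  · simpa [hwv] using ⟨hP, hPcard⟩
  simpa [hwu, hwv] using mul_le_of_le_one_left (Nat.cast_nonneg _) hρ

/- Regularizing one edge shrinks the parts and thereby coarsens the regularity of the other edges,
so the induction is on the set of edges with the regularity parameter `δ` arbitrary. -/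
theorem exists_forall_lowerRegular {V κ : Type*} [Fintype κ] [Nonempty κ] [DecidableEq κ]
    (S : Finset (Sym2 V)) (hS : ∀ e ∈ S, ¬ e.IsDiag) (hd : d < (Fintype.card κ : ℝ)⁻¹) :
    ∀ δ > 0, ∃ ρ > (0 : ℝ), ∀ (W : Type) (C : Sym2 (V × W) → κ) (B : Finset W),
      ∃ (A : V → Finset W) (χ : Sym2 V → κ), (∀ v, ρ * #B ≤ #(A v)) ∧ ∀ u v, s(u, v) ∈ S →
        LowerRegular (fun i j => C s((u, i), (v, j)) = χ s(u, v)) δ d (A u) (A v) := by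
  classical
  induction S using Finset.induction_on with
  | empty =>
    exact fun _ _ => ⟨1, one_pos, fun _ _ B =>
      ⟨fun _ => B, fun _ => Classical.arbitrary κ, by simp, by simp⟩⟩
  | insert e S heS ih =>
    intro δ hδ
    obtain ⟨σ, hσ₀, hσ₁, hcolor⟩ := exists_lowerRegular_color hd hδ
    obtain ⟨ρ, hρ₀, hρ⟩ := ih (fun e he => hS e (mem_insert_of_mem he)) (δ * σ) (by positivity)
    refine ⟨σ * ρ, by positivity, fun W C B => ?_⟩
    obtain ⟨A, χ, hA, hreg⟩ := hρ W C B
    obtain ⟨u, v⟩ := e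
    have huv : u ≠ v := hS s(u, v) (mem_insert_self _ _)
    obtain ⟨k, P, hP, Q, hQ, hPcard, hQcard, hPQ⟩ :=
      hcolor (fun i j => C s((u, i), (v, j))) (A u) (A v)
    obtain ⟨A', hA'u, hA'v, hsub⟩ := exists_shrink_two_parts huv hσ₁ hP hQ hPcard hQcard
    refine ⟨A', Function.update χ s(u, v) k, fun w => ?_, fun x y hxy => ?_⟩
    · calc σ * ρ * #B = σ * (ρ * #B) := mul_assoc _ _ _
        _ ≤ σ * #(A w) := by gcongr; exact hA w
        _ ≤ #(A' w) := (hsub w).2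
    rcases eq_or_ne s(x, y) s(u, v) with hxy' | hxy'
    · rw [hxy', Function.update_self]
      rcases Sym2.eq_iff.1 hxy' with ⟨rfl, rfl⟩ | ⟨rfl, rfl⟩
      · rwa [hA'u, hA'v]
      · rw [hA'u, hA'v]
        simpa only [Sym2.eq_swap] using hPQ.swap
    · rw [Function.update_of_ne hxy']
      exact (hreg x y ((mem_insert.1 hxy).resolve_left hxy')).subset hδ.le (hsub x).1 (hsub y).1
        (hsub x).2 (hsub y).2

end Regularity

section Compactness

/- The colorings making a given copy of `H` monochromatic form an open subset of the compact space
`Sym2 V → Fin r`. -/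
theorem ArrowsFor.exists_finset {V α : Type} [Finite α] {G : SimpleGraph V} {H : SimpleGraph α}
    {r : ℕ} (h : ArrowsFor G H r) :
    ∃ S : Finset (Sym2 V), ↑S ⊆ G.edgeSet ∧
      ArrowsFor (SimpleGraph.fromEdgeSet (S : Set (Sym2 V))) H r := by
  classical
  have := Fintype.ofFinite α
  let mono (p : (α → V) × Fin r) : Set (Sym2 V → Fin r) :=
    ⋂ e : {e : α × α // H.Adj e.1 e.2}, (fun C => C s(p.1 e.1.1, p.1 e.1.2)) ⁻¹' {p.2}
  have hopen (p) : IsOpen (mono p) := isOpen_iInter_of_finite fun e =>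
    (isOpen_discrete _).preimage (continuous_apply s(p.1 e.1.1, p.1 e.1.2))
  let copies : Set ((α → V) × Fin r) :=
    {p | Function.Injective p.1 ∧ ∀ a b, H.Adj a b → G.Adj (p.1 a) (p.1 b)}
  obtain ⟨F, hF⟩ := isCompact_univ.elim_finite_subcover
    (fun p : copies => mono p) (fun p => hopen p) fun C _ => by
      obtain ⟨f, c, hf, hC⟩ := h C
      exact Set.mem_iUnion.2 ⟨⟨(f, c), hf, fun a b hab => (hC a b hab).1⟩,
        Set.mem_iInter.2 fun e => (hC _ _ e.2).2⟩
  let edges (f : α → V) : Finset (Sym2 V) :=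
    (univ.filter fun e : α × α => H.Adj e.1 e.2).image fun e => s(f e.1, f e.2)
  have hedges {f : α → V} {a b : α} (hab : H.Adj a b) : s(f a, f b) ∈ edges f :=
    mem_image.2 ⟨(a, b), by simpa using hab, rfl⟩
  refine ⟨F.biUnion fun p => edges p.1.1, fun e he => ?_, fun C => ?_⟩
  · obtain ⟨p, -, he⟩ := mem_biUnion.1 (mem_coe.1 he)
    obtain ⟨⟨a, b⟩, hab, rfl⟩ := mem_image.1 he
    exact p.2.2 a b (mem_filter.1 hab).2
  · obtain ⟨p, hp⟩ := Set.mem_iUnion.1 (hF (Set.mem_univ C))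
    obtain ⟨hpF, hpC⟩ := Set.mem_iUnion.1 hp
    refine ⟨p.1.1, p.1.2, p.2.1, fun a b hab => ⟨?_, Set.mem_iInter.1 hpC ⟨(a, b), hab⟩⟩⟩
    exact (SimpleGraph.fromEdgeSet_adj _).2
      ⟨mem_coe.2 (mem_biUnion.2 ⟨p, hpF, hedges hab⟩), p.2.1.ne hab.ne⟩

end Compactness

section Counting

theorem sum_cast_card_filter_comm {ι κ : Type*} (s : Finset ι) (t : Finset κ) (g : ι → κ → Prop)
    [∀ i, DecidablePred (g i)] :
    ∑ i ∈ s, (#{j ∈ t | g i j} : ℝ) = ∑ j ∈ t, (#{i ∈ s | g i j} : ℝ) := by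
  exact_mod_cast sum_card_bipartiteAbove_eq_sum_card_bipartiteBelow (s := s) (t := t) g

theorem cast_card_interedges_eq_sum {α β : Type*} (r : α → β → Prop) [∀ a, DecidablePred (r a)]
    (X : Finset α) (Y : Finset β) :
    (#(Rel.interedges r X Y) : ℝ) = ∑ x ∈ X, (#{y ∈ Y | r x y} : ℝ) := by
  simp_rw [Rel.interedges, card_filter, sum_product, Nat.cast_sum]

theorem LowerRegular.card_filter_lt_le {α β : Type*} {r : α → β → Prop} [∀ a, DecidablePred (r a)]
    {X : Finset α} {Y Q : Finset β} {δ d : ℝ} (h : LowerRegular r δ d X Y) (hδ : 0 ≤ δ) (hQ : Q ⊆ Y)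
    (hQcard : δ * #Y ≤ #Q) :
    #{x ∈ X | (#{y ∈ Q | r x y} : ℝ) < d * #Q} ≤ δ * #X := by
  set P := {x ∈ X | (#{y ∈ Q | r x y} : ℝ) < d * #Q} with hP
  by_contra! hlarge
  have hPne : P.Nonempty := card_pos.1 (mod_cast (by positivity : 0 ≤ δ * #X).trans_lt hlarge)
  have hlt : ∑ x ∈ P, (#{y ∈ Q | r x y} : ℝ) < ∑ _x ∈ P, d * #Q :=
    sum_lt_sum_of_nonempty hPne fun x hx => (mem_filter.1 hx).2
  have hreg := h P (filter_subset _ _) Q hQ hlarge.le hQcard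
  rw [cast_card_interedges_eq_sum] at hreg
  rw [sum_const, nsmul_eq_mul] at hlt
  linarith

theorem exists_mul_card_le_card_filter {ι κ : Type*} {s : Finset ι} {t : Finset κ}
    {g : ι → κ → Prop} [∀ i, DecidablePred (g i)] {q : ℝ} (hs : s.Nonempty)
    (h : ∀ j ∈ t, q * #s ≤ #{i ∈ s | g i j}) : ∃ i ∈ s, q * #t ≤ #{j ∈ t | g i j} := by
  refine exists_le_of_sum_le hs ?_
  calc ∑ _i ∈ s, q * #t = ∑ _j ∈ t, q * #s := by simp only [sum_const, nsmul_eq_mul]; ring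
    _ ≤ ∑ j ∈ t, (#{i ∈ s | g i j} : ℝ) := sum_le_sum h
    _ = ∑ i ∈ s, (#{j ∈ t | g i j} : ℝ) := (sum_cast_card_filter_comm s t g).symm

theorem card_filter_le_of_forall_card_filter_le {ι κ : Type*} {s : Finset ι} {t : Finset κ}
    {g : ι → κ → Prop} [∀ i, DecidablePred (g i)] {δ : ℝ} (hδ : 0 < δ)
    (h : ∀ j ∈ t, #{i ∈ s | g i j} ≤ δ ^ 2 * #s) :
    #{i ∈ s | δ * #t < #{j ∈ t | g i j}} ≤ δ * #s := by
  set H := {i ∈ s | δ * #t < (#{j ∈ t | g i j} : ℝ)} with hH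
  obtain rfl | ht := t.eq_empty_or_nonempty
  · simpa [hH] using mul_nonneg hδ.le (Nat.cast_nonneg _)
  have ht₀ : (0 : ℝ) < #t := mod_cast ht.card_pos
  refine le_of_mul_le_mul_right ?_ (mul_pos hδ ht₀)
  calc #H * (δ * #t) = ∑ _i ∈ H, δ * #t := by simp
    _ ≤ ∑ i ∈ H, (#{j ∈ t | g i j} : ℝ) := sum_le_sum fun i hi => (mem_filter.1 hi).2.le
    _ ≤ ∑ i ∈ s, (#{j ∈ t | g i j} : ℝ) :=
        sum_le_sum_of_subset_of_nonneg (filter_subset _ _) fun _ _ _ => Nat.cast_nonneg _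
    _ = ∑ j ∈ t, (#{i ∈ s | g i j} : ℝ) := sum_cast_card_filter_comm s t g
    _ ≤ ∑ _j ∈ t, δ ^ 2 * #s := sum_le_sum h
    _ = δ * #s * (δ * #t) := by simp; ring

/-- The vertices of `t` joined by `g` to at least a proportion `τ` of the vertices of `s`. -/
noncomputable def denseNeighbors {ι κ : Type*} (g : ι → κ → Prop) [∀ i, DecidablePred (g i)] (τ : ℝ)
    (s : Finset ι) (t : Finset κ) : Finset κ :=
  {j ∈ t | τ * #s ≤ #{i ∈ s | g i j}}

theorem mul_card_le_card_denseNeighbors {ι κ : Type*} {s : Finset ι} {t : Finset κ}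
    {g : ι → κ → Prop} [∀ i, DecidablePred (g i)] {δ τ N : ℝ} (hs : s.Nonempty) (ht : #t ≤ N)
    (hτ : 0 ≤ τ) (h : ∀ i ∈ s, (τ + δ) * N ≤ #{j ∈ t | g i j}) :
    δ * N ≤ #(denseNeighbors g τ s t) := by
  have hs₀ : (0 : ℝ) < #s := mod_cast hs.card_pos
  have hpoint : ∀ j ∈ t, (#{i ∈ s | g i j} : ℝ) ≤
      (if τ * #s ≤ #{i ∈ s | g i j} then (#s : ℝ) else 0) + τ * #s := by
    intro j _
    split_ifs with hj
    · exact le_add_of_le_of_nonneg (mod_cast card_filter_le _ _) (by positivity)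
    · rw [zero_add]
      exact (not_le.1 hj).le
  refine le_of_mul_le_mul_right ?_ hs₀
  suffices hsum : (τ + δ) * N * #s ≤ (#(denseNeighbors g τ s t) + τ * N) * #s by
    linarith
  calc (τ + δ) * N * #s = ∑ _i ∈ s, (τ + δ) * N := by simp [mul_comm]
    _ ≤ ∑ i ∈ s, (#{j ∈ t | g i j} : ℝ) := sum_le_sum h
    _ = ∑ j ∈ t, (#{i ∈ s | g i j} : ℝ) := sum_cast_card_filter_comm s t g
    _ ≤ ∑ j ∈ t, ((if τ * #s ≤ #{i ∈ s | g i j} then (#s : ℝ) else 0) + τ * #s) :=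
        sum_le_sum hpoint
    _ = (#(denseNeighbors g τ s t) + τ * #t) * #s := by
        rw [sum_add_distrib, ← sum_filter]
        simp only [denseNeighbors, sum_const, nsmul_eq_mul]
        ring
    _ ≤ (#(denseNeighbors g τ s t) + τ * N) * #s := by gcongr

theorem denseNeighbors_subset_denseNeighbors {ι κ : Type*} {g : ι → κ → Prop}
    [∀ i, DecidablePred (g i)] {τ : ℝ} {s : Finset ι} {t u : Finset κ} (h : t ⊆ u) :
    denseNeighbors g τ s t ⊆ denseNeighbors g τ s u :=
  filter_subset_filter _ h

theorem denseNeighbors_filter {ι κ : Type*} {g : ι → κ → Prop}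
    [∀ i, DecidablePred (g i)] {τ : ℝ} {s : Finset ι} {t : Finset κ} (p : κ → Prop)
    [DecidablePred p] :
    denseNeighbors g τ s {j ∈ t | p j} = {j ∈ denseNeighbors g τ s t | p j} :=
  filter_comm _ _ _

theorem card_le_card_filter_add_add {ι : Type*} {s : Finset ι} {p q r : ι → Prop} [DecidablePred p]
    [DecidablePred q] [DecidablePred r] (h : ∀ i ∈ s, p i ∨ q i ∨ r i) :
    (#s : ℝ) ≤ #{i ∈ s | p i} + (#{i ∈ s | q i} + #{i ∈ s | r i}) := by
  classical
  have hunion : #s ≤ #({i ∈ s | p i} ∪ ({i ∈ s | q i} ∪ {i ∈ s | r i})) := by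
    rw [← filter_or, ← filter_or, filter_true_of_mem h]
  exact_mod_cast hunion.trans
    ((card_union_le _ _).trans (Nat.add_le_add_left (card_union_le _ _) _))

theorem exists_card_fiber_neighbors {α β γ : Type*} [DecidableEq α] [DecidableEq β]
    (f : α → γ → Prop) (g : β → γ → Prop) [∀ a, DecidablePred (f a)] [∀ b, DecidablePred (g b)]
    {R : Finset α} {Q : Finset β} {D : Finset γ} {m : ℕ} (h : 2 ^ (#R + #Q) * m ≤ #D) :
    ∃ R' Q', m ≤ #{c ∈ D | {a ∈ R | f a c} = R' ∧ {b ∈ Q | g b c} = Q'} := by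
  obtain ⟨⟨R', Q'⟩, -, hcard⟩ := exists_le_card_fiber_of_mul_le_card_of_maps_to
    (f := fun c => ({a ∈ R | f a c}, {b ∈ Q | g b c})) (t := R.powerset ×ˢ Q.powerset)
    (fun c _ => by simp) ⟨(∅, ∅), by simp⟩ (by simpa [pow_add] using h)
  exact ⟨R', Q', by simpa only [Prod.mk.injEq] using hcard⟩

end Counting

section RandomTuples

variable {α : Type*} {S : Finset α} {m : ℕ} {d δ : ℝ}

theorem sum_piFinset_exp_neg_mul_card_le {N : α → Prop} [DecidablePred N] {s : ℝ} (hs : 0 ≤ s)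
    (hN : d * #S ≤ #{a ∈ S | N a}) :
    ∑ R ∈ Fintype.piFinset (fun _ : Fin m => S), Real.exp (-s * #{i | N (R i)}) ≤
      Real.exp (-(1 - Real.exp (-s)) * d * m) * #S ^ m := by
  set w : α → ℝ := fun a => if N a then Real.exp (-s) else 1
  have hprod (R : Fin m → α) : Real.exp (-s * #{i | N (R i)}) = ∏ i, w (R i) := by
    rw [prod_ite, prod_const, prod_const_one, mul_one, ← Real.exp_nat_mul, mul_comm]
  have hcoord : ∑ a ∈ S, w a = #S - (1 - Real.exp (-s)) * #{a ∈ S | N a} := by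
    have hsplit : (#{a ∈ S | N a} : ℝ) + #{a ∈ S | ¬ N a} = #S := by
      exact_mod_cast card_filter_add_card_filter_not N
    rw [sum_ite, sum_const, sum_const, nsmul_eq_mul, nsmul_eq_mul]
    linarith
  have hle : ∑ a ∈ S, w a ≤ Real.exp (-(1 - Real.exp (-s)) * d) * #S :=
    calc ∑ a ∈ S, w a ≤ #S - (1 - Real.exp (-s)) * (d * #S) := by
          rw [hcoord]
          gcongr
          exact sub_nonneg.2 (Real.exp_le_one_iff.2 (neg_nonpos.2 hs))
      _ = (-(1 - Real.exp (-s)) * d + 1) * #S := by ring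
      _ ≤ Real.exp (-(1 - Real.exp (-s)) * d) * #S := by gcongr; exact Real.add_one_le_exp _
  calc ∑ R ∈ Fintype.piFinset (fun _ : Fin m => S), Real.exp (-s * #{i | N (R i)})
      = (∑ a ∈ S, w a) ^ m := by
        simp_rw [hprod, sum_prod_piFinset S fun _ => w, prod_const, card_univ, Fintype.card_fin]
    _ ≤ (Real.exp (-(1 - Real.exp (-s)) * d) * #S) ^ m := by
        gcongr
    _ = Real.exp (-(1 - Real.exp (-s)) * d * m) * #S ^ m := by
        rw [mul_pow, ← Real.exp_nat_mul, mul_comm (m : ℝ)]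

theorem sub_sq_le_one_sub_exp_neg {s : ℝ} (hs : 0 ≤ s) : s - s ^ 2 ≤ 1 - Real.exp (-s) := by
  have hle : Real.exp (-s) * (1 + s) ≤ 1 := by
    rw [Real.exp_neg, inv_mul_le_one₀ (Real.exp_pos s), add_comm]
    exact Real.add_one_le_exp s
  nlinarith [Real.exp_pos (-s), pow_nonneg hs 3]

/- Chernoff's bound, from the exponential moment at `s = δ / 2`. -/
theorem card_filter_piFinset_lt_le {N : α → Prop} [DecidablePred N] (hd₀ : 0 ≤ d) (hd₁ : d ≤ 1)
    (hδ : 0 ≤ δ) (hN : d * #S ≤ #{a ∈ S | N a}) :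
    #{R ∈ Fintype.piFinset (fun _ : Fin m => S) | (#{i | N (R i)} : ℝ) < (d - δ) * m} ≤
      Real.exp (-(δ ^ 2 / 4) * m) * #S ^ m := by
  set s := δ / 2 with hs
  have hs₀ : 0 ≤ s := by positivity
  set bad := {R ∈ Fintype.piFinset (fun _ : Fin m => S) |
    (#{i | N (R i)} : ℝ) < (d - δ) * m} with hbad
  have hexp : -(1 - Real.exp (-s)) * d * m ≤ -(δ ^ 2 / 4) * m + -s * ((d - δ) * m) := by
    calc -(1 - Real.exp (-s)) * d * m = -((1 - Real.exp (-s)) * d * m) := by ring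
      _ ≤ -((s - s ^ 2) * d * m) :=
          neg_le_neg (by gcongr ?_ * _ * _; exact sub_sq_le_one_sub_exp_neg hs₀)
      _ = -s * (d * m) + s ^ 2 * m * d := by ring
      _ ≤ -s * (d * m) + s ^ 2 * m :=
          (add_le_add_iff_left _).2 (mul_le_of_le_one_right (by positivity) hd₁)
      _ = -(δ ^ 2 / 4) * m + -s * ((d - δ) * m) := by rw [hs]; ring
  have hweight : #bad * Real.exp (-s * ((d - δ) * m)) ≤
      Real.exp (-(δ ^ 2 / 4) * m) * #S ^ m * Real.exp (-s * ((d - δ) * m)) :=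
    calc #bad * Real.exp (-s * ((d - δ) * m))
        = ∑ _R ∈ bad, Real.exp (-s * ((d - δ) * m)) := by rw [sum_const, nsmul_eq_mul]
      _ ≤ ∑ R ∈ bad, Real.exp (-s * #{i | N (R i)}) := by
          refine sum_le_sum fun R hR => Real.exp_le_exp.2 ?_
          exact mul_le_mul_of_nonpos_left (mem_filter.1 hR).2.le (neg_nonpos.2 hs₀)
      _ ≤ ∑ R ∈ Fintype.piFinset (fun _ : Fin m => S), Real.exp (-s * #{i | N (R i)}) :=
          sum_le_sum_of_subset_of_nonneg (filter_subset _ _) fun _ _ _ => (Real.exp_pos _).le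
      _ ≤ Real.exp (-(1 - Real.exp (-s)) * d * m) * #S ^ m :=
          sum_piFinset_exp_neg_mul_card_le hs₀ hN
      _ ≤ Real.exp (-(δ ^ 2 / 4) * m + -s * ((d - δ) * m)) * #S ^ m := by gcongr
      _ = Real.exp (-(δ ^ 2 / 4) * m) * #S ^ m * Real.exp (-s * ((d - δ) * m)) := by
          rw [Real.exp_add]; ring
  exact le_of_mul_le_mul_right hweight (Real.exp_pos _)

theorem card_filter_piFinset_injective [DecidableEq α] :
    #{R ∈ Fintype.piFinset (fun _ : Fin m => S) | Function.Injective R} =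
      (#S).descFactorial m := by
  have hcard : Fintype.card (Fin m ↪ S) = (#S).descFactorial m := by
    rw [Fintype.card_embedding_eq, Fintype.card_coe, Fintype.card_fin]
  rw [← hcard, ← card_univ]
  refine (card_nbij (fun f i => (f i : α)) (fun f _ => ?_) (fun f _ g _ h => ?_)
    fun R hR => ?_).symm
  · simp only [coe_filter, Set.mem_ofPred_eq, Fintype.mem_piFinset]
    exact ⟨fun i => (f i).2, Subtype.val_injective.comp f.injective⟩
  · exact DFunLike.ext _ _ fun i => Subtype.ext (congrFun h i)
  · simp only [coe_filter, Set.mem_ofPred_eq, Fintype.mem_piFinset] at hR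
    exact ⟨⟨fun i => ⟨R i, hR.1 i⟩, fun i j h => hR.2 (congrArg Subtype.val h)⟩,
      mem_coe.2 (mem_univ _), rfl⟩

theorem one_sub_mul_pow_le_descFactorial {n : ℕ} (hδ₀ : 0 ≤ δ) (hδ₁ : δ ≤ 1)
    (hmn : (m : ℝ) ^ 2 ≤ δ * n) : (1 - δ) * (n : ℝ) ^ m ≤ n.descFactorial m := by
  have hle : m ≤ n := by
    have hsq : m ^ 2 ≤ n := mod_cast hmn.trans (mul_le_of_le_one_left (Nat.cast_nonneg n) hδ₁)
    exact (Nat.le_self_pow two_ne_zero m).trans hsq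
  obtain rfl | hn := n.eq_zero_or_pos
  · simpa [Nat.le_zero.1 hle] using hδ₀
  have hn₀ : (0 : ℝ) < n := mod_cast hn
  have hmn₁ : (m : ℝ) / n ≤ 1 := div_le_one_of_le₀ (mod_cast hle) hn₀.le
  have hmnδ : m * ((m : ℝ) / n) ≤ δ := by
    rw [mul_div_assoc', div_le_iff₀ hn₀, ← sq]
    exact hmn
  calc (1 - δ) * (n : ℝ) ^ m ≤ (1 + m * -((m : ℝ) / n)) * (n : ℝ) ^ m := by
        gcongr; linarith
    _ ≤ (1 + -((m : ℝ) / n)) ^ m * (n : ℝ) ^ m := by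
        gcongr
        exact one_add_mul_le_pow (by linarith) m
    _ = (n - m : ℕ) ^ m := by
        rw [← mul_pow, Nat.cast_sub hle]
        field_simp
        ring
    _ ≤ n.descFactorial m := by
        refine mod_cast le_trans ?_ (Nat.pow_sub_le_descFactorial n m)
        gcongr
        exact n.le_succ

theorem card_filter_piFinset_not_injective_le [DecidableEq α] (hδ₀ : 0 ≤ δ) (hδ₁ : δ ≤ 1)
    (hmS : (m : ℝ) ^ 2 ≤ δ * #S) :
    #{R ∈ Fintype.piFinset (fun _ : Fin m => S) | ¬ Function.Injective R} ≤ δ * (#S : ℝ) ^ m := by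
  have hsplit : (#{R ∈ Fintype.piFinset (fun _ : Fin m => S) | Function.Injective R} : ℝ) +
      #{R ∈ Fintype.piFinset (fun _ : Fin m => S) | ¬ Function.Injective R} = #S ^ m := by
    have hcard := Fintype.card_piFinset_const S m
    rw [← card_filter_add_card_filter_not (fun R : Fin m → α => Function.Injective R)] at hcard
    exact_mod_cast hcard
  rw [card_filter_piFinset_injective] at hsplit
  linarith [one_sub_mul_pow_le_descFactorial hδ₀ hδ₁ hmS]

end RandomTuples

section Triangles

variable {α β γ : Type*} {δ d : ℝ} {m : ℕ}

theorem mul_pow_le_card_filter_injective_denseNeighbors [DecidableEq α] {r : α → γ → Prop}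
    [∀ a, DecidablePred (r a)] {S : Finset α} {D : Finset γ} (hδ₀ : 0 < δ) (hδ₁ : δ ≤ 1)
    (hd₀ : 0 ≤ d) (hd₁ : d ≤ 1) (hm : Real.exp (-(δ ^ 2 / 4) * m) ≤ δ ^ 2)
    (hmS : (m : ℝ) ^ 2 ≤ δ * #S) (hD : ∀ c ∈ D, d * #S ≤ #{a ∈ S | r a c}) :
    (1 - 2 * δ) * #S ^ m ≤ #{R ∈ Fintype.piFinset (fun _ : Fin m => S) | Function.Injective R ∧
      (1 - δ) * #D ≤ #(denseNeighbors r (d - δ) (univ.image R) D)} := by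
  set bad : (Fin m → α) → γ → Prop := fun R c => (#{i | r (R i) c} : ℝ) < (d - δ) * m
  have hcard : (#(Fintype.piFinset (fun _ : Fin m => S)) : ℝ) = #S ^ m := by simp
  have hchernoff : ∀ c ∈ D, #{R ∈ Fintype.piFinset (fun _ : Fin m => S) | bad R c} ≤
      δ ^ 2 * #(Fintype.piFinset (fun _ : Fin m => S)) := by
    intro c hc
    rw [hcard]
    exact (card_filter_piFinset_lt_le hd₀ hd₁ hδ₀.le (hD c hc)).trans (by gcongr)
  have hmarkov := card_filter_le_of_forall_card_filter_le hδ₀ hchernoff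
  have hinj := card_filter_piFinset_not_injective_le hδ₀.le hδ₁ hmS
  have hdense {R : Fin m → α} (hR : Function.Injective R) :
      (#(denseNeighbors r (d - δ) (univ.image R) D) : ℝ) = #D - #{c ∈ D | bad R c} := by
    have hnot : denseNeighbors r (d - δ) (univ.image R) D = {c ∈ D | ¬ bad R c} := by
      simp [denseNeighbors, bad, filter_image, card_image_of_injective _ hR]
    rw [hnot, eq_sub_iff_add_eq']
    exact_mod_cast card_filter_add_card_filter_not _
  have hcover := card_le_card_filter_add_add (s := Fintype.piFinset (fun _ : Fin m => S))
    (p := fun R => Function.Injective R ∧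
      (1 - δ) * #D ≤ #(denseNeighbors r (d - δ) (univ.image R) D))
    (q := fun R => δ * #D < #{c ∈ D | bad R c}) (r := fun R => ¬ Function.Injective R) <| by
      intro R _
      by_cases hR : Function.Injective R
      · refine (lt_or_ge _ _).symm.imp (fun hfew => ⟨hR, ?_⟩) .inl
        rw [hdense hR]
        linarith
      · exact .inr (.inr hR)
  rw [hcard] at hcover hmarkov
  linarith

theorem LowerRegular.mul_pow_le_card_filter_denseNeighbors [DecidableEq α] {r : α → γ → Prop}
    [∀ a, DecidablePred (r a)] {A S : Finset α} {C D : Finset γ} (h : LowerRegular r δ d A C)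
    (hδ₀ : 0 < δ) (hδd : δ ≤ d) (hd₁ : d ≤ 1) (hm : Real.exp (-(δ ^ 2 / 4) * m) ≤ δ ^ 2)
    (hS : S ⊆ A) (hScard : δ * #A ≤ #S) (hmS : (m : ℝ) ^ 2 ≤ δ * #S)
    (hD : D ⊆ C) (hDcard : d * #C ≤ #D) :
    (1 - 2 * δ) * #S ^ m ≤ #{R ∈ Fintype.piFinset (fun _ : Fin m => S) | Function.Injective R ∧
      (d - 2 * δ) * #C ≤ #(denseNeighbors r (d - δ) (univ.image R) D)} := by
  have hfew := h.swap.card_filter_lt_le hδ₀.le hS hScard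
  set D' := {c ∈ D | d * #S ≤ #{a ∈ S | r a c}} with hD'
  have hD'card : (d - δ) * #C ≤ #D' := by
    have hsplit : (#D' : ℝ) + #{c ∈ D | ¬ d * #S ≤ #{a ∈ S | r a c}} = #D := by
      exact_mod_cast card_filter_add_card_filter_not _
    have hmono : (#{c ∈ D | ¬ d * #S ≤ #{a ∈ S | r a c}} : ℝ) ≤
        #{c ∈ C | (#{a ∈ S | r a c} : ℝ) < d * #S} := by
      simp_rw [not_le]
      exact_mod_cast card_le_card (filter_subset_filter _ hD)
    linarith
  have hC : (d - 2 * δ) * #C ≤ (1 - δ) * #D' :=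
    calc (d - 2 * δ) * #C ≤ (1 - δ) * ((d - δ) * #C) := by
          rw [← mul_assoc]; gcongr; nlinarith
      _ ≤ (1 - δ) * #D' := by gcongr; linarith
  refine (mul_pow_le_card_filter_injective_denseNeighbors (D := D') hδ₀ (hδd.trans hd₁)
    (hδ₀.le.trans hδd) hd₁ hm hmS fun c hc => (mem_filter.1 hc).2).trans ?_
  refine mod_cast card_le_card (monotone_filter_right _ fun R _ hR => ⟨hR.1, ?_⟩)
  exact hC.trans (hR.2.trans (mod_cast card_le_card
    (denseNeighbors_subset_denseNeighbors (filter_subset _ _))))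

theorem LowerRegular.mul_pow_le_card_filter_forall [DecidableEq α] {r : α → γ → Prop}
    [∀ a, DecidablePred (r a)] {A : Finset α} {p : α → Prop} [DecidablePred p] {C D : Finset γ}
    (h : LowerRegular r δ d A C) (hδ₀ : 0 < δ) (hδd : 2 * δ ≤ d) (hd₁ : d ≤ 1)
    (hm : Real.exp (-(δ ^ 2 / 4) * m) ≤ δ ^ 2) (hp : d * #A ≤ #{a ∈ A | p a})
    (hmA : (m : ℝ) ^ 2 ≤ δ * (d * #A)) (hD : D ⊆ C) (hDcard : d * #C ≤ #D) :
    (1 - 2 * δ) * (d * #A) ^ m ≤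
      #{R ∈ Fintype.piFinset (fun _ : Fin m => A) | Function.Injective R ∧ (∀ i, p (R i)) ∧
        (d - 2 * δ) * #C ≤ #(denseNeighbors r (d - δ) (univ.image R) D)} := by
  have hδd' : δ ≤ d := by linarith
  have hd₀ : 0 ≤ d := hδ₀.le.trans hδd'
  have hScard : δ * #A ≤ #{a ∈ A | p a} := le_trans (by gcongr) hp
  have hcount := h.mul_pow_le_card_filter_denseNeighbors hδ₀ hδd' hd₁ hm (filter_subset p A) hScard
    (hmA.trans (by gcongr)) hD hDcard
  calc (1 - 2 * δ) * (d * #A) ^ m ≤ (1 - 2 * δ) * #{a ∈ A | p a} ^ m := by gcongr; linarith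
    _ ≤ _ := hcount
    _ ≤ _ := by
      refine mod_cast card_le_card fun R hR => ?_
      simp only [mem_filter, Fintype.mem_piFinset] at hR ⊢
      exact ⟨fun i => (hR.1 i).1, hR.2.1, fun i => (hR.1 i).2, hR.2.2⟩

theorem LowerRegular.exists_typical_subset {f : α → β → Prop} {h : β → γ → Prop}
    [∀ a, DecidablePred (f a)] [∀ b, DecidablePred (h b)] {A : Finset α} {B : Finset β}
    {C : Finset γ} (hf : LowerRegular f δ d A B) (hh : LowerRegular h δ d B C) (hδ₀ : 0 ≤ δ)
    (hδ₁ : δ ≤ 1) :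
    ∃ B' ⊆ B, (1 - 2 * δ) * #B ≤ #B' ∧
      ∀ b ∈ B', d * #A ≤ #{a ∈ A | f a b} ∧ d * #C ≤ #{c ∈ C | h b c} := by
  have hfewA := hf.swap.card_filter_lt_le hδ₀ subset_rfl
    (mul_le_of_le_one_left (Nat.cast_nonneg _) hδ₁)
  have hfewC := hh.card_filter_lt_le hδ₀ subset_rfl
    (mul_le_of_le_one_left (Nat.cast_nonneg _) hδ₁)
  have hcover := card_le_card_filter_add_add (s := B)
    (p := fun b => d * #A ≤ #{a ∈ A | f a b} ∧ d * #C ≤ #{c ∈ C | h b c})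
    (q := fun b => (#{a ∈ A | f a b} : ℝ) < d * #A)
    (r := fun b => (#{c ∈ C | h b c} : ℝ) < d * #C) fun b _ => by
      simp only [← not_le]; tauto
  exact ⟨_, filter_subset _ _, by linarith, fun b hb => (mem_filter.1 hb).2⟩

theorem exists_complete_denseNeighbors
    {f : α → β → Prop} {g : α → γ → Prop} {h : β → γ → Prop} [∀ a, DecidablePred (f a)]
    [∀ a, DecidablePred (g a)] [∀ b, DecidablePred (h b)] {A : Finset α} {B : Finset β}
    {C : Finset γ} (hf : LowerRegular f δ d A B) (hg : LowerRegular g δ d A C)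
    (hh : LowerRegular h δ d B C) (hδ₀ : 0 < δ) (hδd : 4 * δ ≤ d) (hd₁ : d ≤ 1) (hm₁ : 1 ≤ m)
    (hm : Real.exp (-(δ ^ 2 / 4) * m) ≤ δ ^ 2) (hA : (m : ℝ) ^ 2 ≤ δ * (d * #A))
    (hB : 4 * m ≤ d ^ m * #B) :
    ∃ R ⊆ A, ∃ Q ⊆ B, #R = m ∧ #Q = m ∧ ∀ b ∈ Q, (∀ a ∈ R, f a b) ∧
      (d - 2 * δ) * #C ≤ #{c ∈ denseNeighbors g (d - δ) R C | h b c} := by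
  classical
  have hd₀ : 0 < d := by linarith
  have hA₀ : A.Nonempty := by
    rw [nonempty_iff_ne_empty]
    rintro rfl
    simp only [card_empty, Nat.cast_zero, mul_zero] at hA
    exact hA.not_gt (by positivity)
  obtain ⟨B', hB', hB'card, htypical⟩ := hf.exists_typical_subset hh hδ₀.le
    (by linarith)
  let good : (Fin m → α) → β → Prop := fun R b => Function.Injective R ∧ (∀ i, f (R i) b) ∧
    (d - 2 * δ) * #C ≤ #{c ∈ denseNeighbors g (d - δ) (univ.image R) C | h b c}
  have hgood : ∀ b ∈ B', d ^ m / 2 * #(Fintype.piFinset fun _ : Fin m => A) ≤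
      #{R ∈ Fintype.piFinset (fun _ : Fin m => A) | good R b} := by
    intro b hb
    have hp := hg.mul_pow_le_card_filter_forall hδ₀ (by linarith) hd₁ hm (htypical b hb).1 hA
      (filter_subset _ _) (htypical b hb).2
    simp_rw [denseNeighbors_filter] at hp
    refine le_trans ?_ hp
    rw [Fintype.card_piFinset_const, Nat.cast_pow, div_mul_eq_mul_div, ← mul_pow,
      div_eq_inv_mul]
    gcongr
    linarith
  obtain ⟨R, hR, hRcard⟩ := exists_mul_card_le_card_filter
    (Fintype.piFinset_nonempty.2 fun _ => hA₀) hgood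
  have hB'm : (m : ℝ) ≤ d ^ m / 2 * #B' := by
    have hhalf : (#B : ℝ) / 2 ≤ #B' := le_trans (by nlinarith [Nat.cast_nonneg (α := ℝ) #B]) hB'card
    calc (m : ℝ) ≤ d ^ m / 2 * (#B / 2) := by linarith
      _ ≤ d ^ m / 2 * #B' := by gcongr
  have hmcard : m ≤ #{b ∈ B' | good R b} := Nat.cast_le.1 (hB'm.trans hRcard)
  obtain ⟨Q, hQ, hQcard⟩ := exists_subset_card_eq hmcard
  have hQgood : ∀ b ∈ Q, good R b := fun b hb => (mem_filter.1 (hQ hb)).2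
  have hRinj : Function.Injective R := by
    obtain ⟨b, hb⟩ := card_pos.1 (hQcard ▸ hm₁)
    exact (hQgood b hb).1
  refine ⟨univ.image R, ?_, Q, hQ.trans ((filter_subset _ _).trans hB'), ?_, hQcard,
    fun b hb => ⟨?_, (hQgood b hb).2.2⟩⟩
  · simpa [subset_iff] using Fintype.mem_piFinset.1 hR
  · simp [card_image_of_injective _ hRinj]
  · simpa using (hQgood b hb).2.1

theorem exists_complete_triple
    {f : α → β → Prop} {g : α → γ → Prop} {h : β → γ → Prop} [∀ a, DecidablePred (f a)]
    [∀ a, DecidablePred (g a)] [∀ b, DecidablePred (h b)] {A : Finset α} {B : Finset β}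
    {C : Finset γ} (hf : LowerRegular f δ d A B) (hg : LowerRegular g δ d A C)
    (hh : LowerRegular h δ d B C) (hδ₀ : 0 < δ) (hδd : 4 * δ ≤ d) (hd₁ : d ≤ 1) (hm₁ : 1 ≤ m)
    (hm : Real.exp (-(δ ^ 2 / 4) * m) ≤ δ ^ 2) (hA : (m : ℝ) ^ 2 ≤ δ * (d * #A))
    (hB : 4 * m ≤ d ^ m * #B) (hC : 4 ^ m * m ≤ δ * #C) :
    ∃ R ⊆ A, ∃ Q ⊆ B, ∃ T ⊆ C, (d - 3 * δ) * m ≤ #R ∧ (d - 3 * δ) * m ≤ #Q ∧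
      (d - 3 * δ) * m ≤ #T ∧ (∀ a ∈ R, ∀ b ∈ Q, f a b) ∧ (∀ a ∈ R, ∀ c ∈ T, g a c) ∧
      ∀ b ∈ Q, ∀ c ∈ T, h b c := by
  classical
  obtain ⟨R, hR, Q, hQ, hRcard, hQcard, hRQ⟩ :=
    exists_complete_denseNeighbors hf hg hh hδ₀ hδd hd₁ hm₁ hm hA hB
  set D := denseNeighbors h (d - 3 * δ) Q (denseNeighbors g (d - δ) R C)
  have hDcard : δ * #C ≤ #D := by
    refine mul_card_le_card_denseNeighbors (card_pos.1 (hQcard ▸ hm₁))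
      (mod_cast card_filter_le _ _) (by linarith) fun b hb => ?_
    convert (hRQ b hb).2 using 2
    ring
  have htraces : 2 ^ (#R + #Q) * m ≤ #D := by
    rw [hRcard, hQcard, ← two_mul, pow_mul]
    exact_mod_cast hC.trans hDcard
  obtain ⟨R', Q', hfiber⟩ := exists_card_fiber_neighbors g h htraces
  set T := {c ∈ D | {a ∈ R | g a c} = R' ∧ {b ∈ Q | h b c} = Q'} with hT
  obtain ⟨c, hc⟩ : T.Nonempty := card_pos.1 (by omega)
  obtain ⟨hcD, rfl, rfl⟩ := mem_filter.1 hc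
  obtain ⟨hcC, hcQ⟩ := mem_filter.1 hcD
  obtain ⟨hcC, hcR⟩ := mem_filter.1 hcC
  rw [hRcard] at hcR
  rw [hQcard] at hcQ
  have hTC : T ⊆ C := fun c hc => (mem_filter.1 (mem_filter.1 (mem_filter.1 hc).1).1).1
  refine ⟨{a ∈ R | g a c}, (filter_subset _ _).trans hR, {b ∈ Q | h b c},
    (filter_subset _ _).trans hQ, T, hTC, ?_, hcQ, ?_, ?_, ?_, ?_⟩
  · exact le_trans (by gcongr; linarith) hcR
  · exact (mul_le_of_le_one_left (Nat.cast_nonneg m) (by linarith)).trans (mod_cast hfiber)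
  · exact fun a ha b hb => (hRQ b (mem_filter.1 hb).1).1 a (mem_filter.1 ha).1
  · intro a ha x hx
    rw [← (mem_filter.1 hx).2.1] at ha
    exact (mem_filter.1 ha).2
  · intro b hb x hx
    rw [← (mem_filter.1 hx).2.2] at hb
    exact (mem_filter.1 hb).2

end Triangles

section Blowups

theorem exists_complete_triple_of_le_card {α β γ : Type*} {f : α → β → Prop} {g : α → γ → Prop}
    {h : β → γ → Prop} [∀ a, DecidablePred (f a)] [∀ a, DecidablePred (g a)]
    [∀ b, DecidablePred (h b)] {A : Finset α} {B : Finset β} {C : Finset γ} {δ d b : ℝ} {m : ℕ}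
    (hf : LowerRegular f δ d A B) (hg : LowerRegular g δ d A C) (hh : LowerRegular h δ d B C)
    (hδ₀ : 0 < δ) (hδd : 4 * δ ≤ d) (hd₁ : d ≤ 1) (hb : 4 ≤ b) (hbd : 1 ≤ d * b) (hm₁ : 1 ≤ m)
    (hm : Real.exp (-(δ ^ 2 / 4) * m) ≤ δ ^ 2) (hA : 4 / δ ^ 2 * m * b ^ m ≤ #A)
    (hB : 4 / δ ^ 2 * m * b ^ m ≤ #B) (hC : 4 / δ ^ 2 * m * b ^ m ≤ #C) :
    ∃ R ⊆ A, ∃ Q ⊆ B, ∃ T ⊆ C, (d - 3 * δ) * m ≤ #R ∧ (d - 3 * δ) * m ≤ #Q ∧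
      (d - 3 * δ) * m ≤ #T ∧ (∀ x ∈ R, ∀ y ∈ Q, f x y) ∧ (∀ x ∈ R, ∀ z ∈ T, g x z) ∧
      ∀ y ∈ Q, ∀ z ∈ T, h y z := by
  have hd₀ : 0 < d := by linarith
  have hmb : (m : ℝ) ≤ b ^ m := calc
    (m : ℝ) ≤ 2 ^ m := mod_cast Nat.lt_two_pow_self.le
    _ ≤ b ^ m := by gcongr; linarith
  refine exists_complete_triple hf hg hh hδ₀ hδd hd₁ hm₁ hm ?_ ?_ ?_
  · calc (m : ℝ) ^ 2 ≤ 16 * (m * b ^ m) := by nlinarith [sq_nonneg (m : ℝ)]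
      _ = δ * (4 * δ * (4 / δ ^ 2 * m * b ^ m)) := by field_simp; ring
      _ ≤ δ * (d * #A) := by gcongr
  · calc (4 * m : ℝ) ≤ 4 / δ ^ 2 * m * (d * b) ^ m := by
          have hle : (4 : ℝ) ≤ 4 / δ ^ 2 := by
            rw [le_div_iff₀ (by positivity)]
            nlinarith
          exact (mul_le_mul_of_nonneg_right hle (Nat.cast_nonneg m)).trans
            (le_mul_of_one_le_right (by positivity) (one_le_pow₀ hbd))
      _ = d ^ m * (4 / δ ^ 2 * m * b ^ m) := by rw [mul_pow]; ring
      _ ≤ d ^ m * #B := by gcongr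
  · calc (4 : ℝ) ^ m * m ≤ 4 / δ * m * b ^ m := by
          have hle : (m : ℝ) ≤ 4 / δ * m := by
            refine le_mul_of_one_le_left (Nat.cast_nonneg m) ?_
            rw [one_le_div hδ₀]
            linarith
          rw [mul_comm]
          gcongr
      _ = δ * (4 / δ ^ 2 * m * b ^ m) := by field_simp
      _ ≤ δ * #C := by gcongr

theorem hasMonoCanonicalBlowup_of_finsets {V α : Type} [LinearOrder α] {G : SimpleGraph V}
    {H : SimpleGraph α} {n t r : ℕ} {C : Sym2 (V × Fin n) → Fin r} {φ : α → V} {c : Fin r}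
    (hφ : Function.Injective φ) (hadj : ∀ a b, H.Adj a b → G.Adj (φ a) (φ b))
    {W : α → Finset (Fin n)} (hW : ∀ a, t ≤ #(W a))
    (hC : ∀ a b, a < b → H.Adj a b → ∀ i ∈ W a, ∀ j ∈ W b, C s((φ a, i), (φ b, j)) = c) :
    HasMonoCanonicalBlowup G H n t r C := by
  have hmem (a : α) (i : Fin t) : (W a).orderEmbOfCardLe (hW a) i ∈ W a :=
    orderEmbOfCardLe_mem _ _ _
  refine ⟨φ, fun a => (W a).orderEmbOfCardLe (hW a), c, hφ,
    fun a => ((W a).orderEmbOfCardLe (hW a)).injective,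
    fun a b hab => ⟨hadj a b hab, fun i j => ?_⟩⟩
  rcases hab.ne.lt_or_gt with hlt | hlt
  · exact hC a b hlt hab _ (hmem a i) _ (hmem b j)
  · rw [Sym2.eq_swap]
    exact hC b a hlt hab.symm _ (hmem b j) _ (hmem a i)

theorem ArrowsFor.exists_lowerRegular_parts {V α : Type} [Finite α] {G : SimpleGraph V}
    {H : SimpleGraph α} {r : ℕ} (hr : 0 < r) (hG : ArrowsFor G H r) {δ d : ℝ} (hδ : 0 < δ)
    (hd : d < (r : ℝ)⁻¹) :
    ∃ ρ > (0 : ℝ), ∀ (n : ℕ) (C : Sym2 (V × Fin n) → Fin r),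
      ∃ (φ : α → V) (c : Fin r) (A : α → Finset (Fin n)), Function.Injective φ ∧
        (∀ a, ρ * n ≤ #(A a)) ∧ ∀ a b, H.Adj a b → G.Adj (φ a) (φ b) ∧
          LowerRegular (fun i j => C s((φ a, i), (φ b, j)) = c) δ d (A a) (A b) := by
  have : NeZero r := ⟨hr.ne'⟩
  obtain ⟨S, hSG, hS⟩ := hG.exists_finset
  obtain ⟨ρ, hρ₀, hρ⟩ := exists_forall_lowerRegular (κ := Fin r) S
    (fun e he => G.not_isDiag_of_mem_edgeSet (hSG he)) (by rwa [Fintype.card_fin]) δ hδ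
  refine ⟨ρ, hρ₀, fun n C => ?_⟩
  obtain ⟨A, χ, hA, hreg⟩ := hρ (Fin n) C univ
  obtain ⟨φ, c, hφ, hφc⟩ := hS χ
  refine ⟨φ, c, fun a => A (φ a), hφ, fun a => ?_, fun a b hab => ?_⟩
  · simpa only [card_fin] using hA (φ a)
  · obtain ⟨hadj, hc⟩ := hφc a b hab
    have hmem : s(φ a, φ b) ∈ S := ((SimpleGraph.fromEdgeSet_adj _).1 hadj).1
    exact ⟨hSG hmem, by simpa only [hc] using hreg _ _ hmem⟩

theorem ArrowsFor.exists_eventually_blowupArrow {V : Type} {G : SimpleGraph V} {r : ℕ}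
    (hr : 0 < r) (hG : ArrowsFor G (⊤ : SimpleGraph (Fin 3)) r) {b q : ℝ} (hb : 4 ≤ b)
    (hq : q < (r : ℝ)⁻¹) (hqb : 1 ≤ q * b) :
    ∃ K ≥ (0 : ℝ), ∀ᶠ m : ℕ in Filter.atTop, ∀ n t : ℕ, t ≤ q * m → K * m * b ^ m ≤ n →
      BlowupArrow G (⊤ : SimpleGraph (Fin 3)) r n t := by
  have hq₀ : 0 < q := by nlinarith
  have hr₁ : (r : ℝ)⁻¹ ≤ 1 := inv_le_one_of_one_le₀ (mod_cast hr)
  obtain ⟨δ, hδ₀, hδ⟩ : ∃ δ > 0, q + 5 * δ = (r : ℝ)⁻¹ :=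
    ⟨((r : ℝ)⁻¹ - q) / 5, by linarith, by ring⟩
  obtain ⟨ρ, hρ₀, hρ⟩ := hG.exists_lowerRegular_parts hr hδ₀ (d := q + 4 * δ) (by linarith)
  have hexp : ∀ᶠ m : ℕ in Filter.atTop, Real.exp (-(δ ^ 2 / 4) * m) ≤ δ ^ 2 := by
    simp only [neg_mul]
    exact (Real.tendsto_exp_neg_atTop_nhds_zero.comp (tendsto_natCast_atTop_atTop.const_mul_atTop
      (show 0 < δ ^ 2 / 4 by positivity))).eventually_le_const (by positivity)
  refine ⟨4 / δ ^ 2 / ρ, by positivity, ?_⟩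
  filter_upwards [hexp, Filter.eventually_ge_atTop 1] with m hm hm₁ n t ht hn C
  obtain ⟨φ, c, A, hφ, hA, hadj⟩ := hρ n C
  have hcard (a : Fin 3) : 4 / δ ^ 2 * m * b ^ m ≤ #(A a) := calc
    4 / δ ^ 2 * m * b ^ m = ρ * (4 / δ ^ 2 / ρ * m * b ^ m) := by field_simp
    _ ≤ ρ * n := by gcongr
    _ ≤ #(A a) := hA a
  have hreg {a b : Fin 3} (hab : a ≠ b) := (hadj a b hab).2
  obtain ⟨R, -, Q, -, T, -, hR, hQ, hT, hRQ, hRT, hQT⟩ := exists_complete_triple_of_le_card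
    (hreg (a := 0) (b := 1) (by decide)) (hreg (a := 0) (b := 2) (by decide))
    (hreg (a := 1) (b := 2) (by decide)) hδ₀ (by linarith)
    (by linarith) hb (by nlinarith) hm₁ hm (hcard 0) (hcard 1) (hcard 2)
  have htcard {W : Finset (Fin n)} (hW : (q + 4 * δ - 3 * δ) * m ≤ #W) : t ≤ #W :=
    Nat.cast_le.1 (ht.trans (le_trans (by gcongr; linarith) hW))
  refine hasMonoCanonicalBlowup_of_finsets (W := ![R, Q, T]) (c := c) hφ
    (fun a b hab => (hadj a b hab).1) ?_ ?_
  · simp [Fin.forall_fin_succ, htcard hR, htcard hQ, htcard hT]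
  · simpa [Fin.forall_fin_succ] using ⟨⟨hRQ, hRT⟩, hQT⟩

end Blowups

section Asymptotics

theorem eventually_mul_natCast_le_pow {β : ℝ} (hβ : 1 < β) (L : ℝ) :
    ∀ᶠ t : ℕ in Filter.atTop, L * t ≤ β ^ t := by
  have hlim := (tendsto_pow_const_div_const_pow_of_one_lt 1 hβ).const_mul L
  rw [mul_zero] at hlim
  filter_upwards [hlim.eventually_le_const one_pos] with t ht
  rwa [pow_one, ← mul_div_assoc, div_le_one (by positivity)] at ht

theorem eventually_mul_mul_pow_ceil_le_floor_rpow {b c c' K : ℝ} (hb : 1 < b) (hc : 0 ≤ c)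
    (hcc' : c < c') (hK : 0 ≤ K) :
    ∀ᶠ t : ℕ in Filter.atTop, K * ⌈c * t⌉₊ * b ^ ⌈c * t⌉₊ ≤ ⌊b ^ (c' * t)⌋₊ := by
  have hb₀ : 0 < b := by positivity
  have hβ : 1 < b ^ (c' - c) := Real.one_lt_rpow hb (sub_pos.2 hcc')
  filter_upwards [eventually_mul_natCast_le_pow hβ (K * (c + 1) * b + 1),
    Filter.eventually_ge_atTop 1] with t ht ht₁
  have ht₁' : (1 : ℝ) ≤ t := mod_cast ht₁
  have hceil : (⌈c * t⌉₊ : ℝ) ≤ c * t + 1 := (Nat.ceil_lt_add_one (by positivity)).le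
  have hpow : b ^ ⌈c * t⌉₊ ≤ b ^ (c * t) * b := calc
    b ^ ⌈c * t⌉₊ = b ^ (⌈c * t⌉₊ : ℝ) := (Real.rpow_natCast _ _).symm
    _ ≤ b ^ (c * t + 1) := Real.rpow_le_rpow_of_exponent_le hb.le hceil
    _ = b ^ (c * t) * b := Real.rpow_add_one hb₀.ne' _
  have hone : 1 ≤ t * b ^ (c * t) :=
    one_le_mul_of_one_le_of_one_le ht₁' (Real.one_le_rpow hb.le (by positivity))
  have hmain : K * ⌈c * t⌉₊ * b ^ ⌈c * t⌉₊ + 1 ≤ b ^ (c' * t) := calc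
    K * ⌈c * t⌉₊ * b ^ ⌈c * t⌉₊ + 1
      ≤ K * ((c + 1) * t) * (b ^ (c * t) * b) + t * b ^ (c * t) := by
        gcongr
        linarith
    _ = (K * (c + 1) * b + 1) * t * b ^ (c * t) := by ring
    _ ≤ (b ^ (c' - c)) ^ t * b ^ (c * t) := by gcongr
    _ = b ^ (c' * t) := by
        rw [← Real.rpow_mul_natCast hb₀.le, ← Real.rpow_add hb₀, sub_mul, sub_add_cancel]
  linarith [Nat.lt_floor_add_one (b ^ (c' * t))]

end Asymptotics

theorem blowup_ramsey_triangle_bound_general {V : Type} (G : SimpleGraph V) {r : ℕ} (hr : 0 < r)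
    (hG : ArrowsFor G (⊤ : SimpleGraph (Fin 3)) r) {b ε : ℝ} (hb : 4 ≤ b) (hrb : r < b)
    (hε : 0 < ε) :
    ∃ t₀ : ℕ, ∀ t : ℕ, t₀ ≤ t → ∃ n : ℕ, (n : ℝ) ≤ b ^ ((r + ε) * t) ∧
      BlowupArrow G (⊤ : SimpleGraph (Fin 3)) r n t := by
  have hr₀ : (0 : ℝ) < r := mod_cast hr
  have hb₀ : 0 < b := by linarith
  obtain ⟨c, hrc, hcε⟩ := exists_between (lt_add_of_pos_right (r : ℝ) hε)
  have hc₀ : 0 < c := hr₀.trans hrc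
  let q : ℝ := max b⁻¹ c⁻¹
  have hq : q < (r : ℝ)⁻¹ := max_lt (by gcongr) (by gcongr)
  have hqb : 1 ≤ q * b := (inv_le_iff_one_le_mul₀ hb₀).1 (le_max_left _ _)
  obtain ⟨K, hK, harrow⟩ := hG.exists_eventually_blowupArrow hr hb hq hqb
  have hm : Filter.Tendsto (fun t : ℕ => ⌈c * t⌉₊) Filter.atTop Filter.atTop :=
    tendsto_nat_ceil_atTop.comp (tendsto_natCast_atTop_atTop.const_mul_atTop hc₀)
  refine Filter.eventually_atTop.1 ?_
  filter_upwards [hm.eventually harrow, eventually_mul_mul_pow_ceil_le_floor_rpow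
    (by linarith : 1 < b) hc₀.le hcε hK] with t hblowup hn
  refine ⟨⌊b ^ ((r + ε) * t)⌋₊, Nat.floor_le (by positivity), hblowup _ t ?_ hn⟩
  calc (t : ℝ) = c⁻¹ * (c * t) := by field_simp
    _ ≤ q * ⌈c * t⌉₊ := by
      gcongr
      · exact le_max_right _ _
      · exact Nat.le_ceil _

/-- consequence of Theorem 1.2 for triangles. For every `ε > 0` and every
graph `G` with `G →₂ K₃`, for all sufficiently large `t` we have
`B₂(G → K₃; t) ≤ 2^((4+ε)t)`. -/
theorem blowup_ramsey_triangle_bound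
    (ε : ℝ) (hε : 0 < ε) (V : Type) [Fintype V] (G : SimpleGraph V)
    (hG : ArrowsFor G (⊤ : SimpleGraph (Fin 3)) 2) :
    ∃ t₀ : ℕ, ∀ t : ℕ, t₀ ≤ t →
      ∃ n : ℕ, (n : ℝ) ≤ (2 : ℝ) ^ ((4 + ε) * (t : ℝ)) ∧
        BlowupArrow G (⊤ : SimpleGraph (Fin 3)) 2 n t := by
  have hbase (t : ℕ) : (4 : ℝ) ^ (((2 : ℕ) + ε / 2) * t) = 2 ^ ((4 + ε) * t) := by
    rw [show (4 : ℝ) = 2 ^ (2 : ℝ) by norm_num, ← Real.rpow_mul zero_le_two]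
    push_cast
    ring_nf
  simpa only [hbase] using
    blowup_ramsey_triangle_bound_general G two_pos hG le_rfl (by norm_num) (half_pos hε)
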